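/- arXiv:2512.19525 — 5 statements merged into one kernel-verified Lean document; each statement's English description precedes it below -/
import Mathlib

section
/- Mass non-increase (Lemma 4.2): Let (G(t))_{t≥0} be a weak solution of the wave kinetic equation whose weak formulation extends to the constant test function φ ≡ 1, i.e., t ↦ G(t)([0,∞)) is differentiable with derivative ℜ₁[1] + ℜ₂[1] + ℜ₃[1]. Then for all t ≥ 0, G(t)([0,∞)) ≤ G(0)([0,∞)). -/
open MeasureTheory Set Real Filter

noncomputable section

/-- Structural parameters and the dispersion relation of the wave kinetic equation. -/
structure KineticParams where
  δ : ℝ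
  δ' : ℝ
  Cd : ℝ
  Cd' : ℝ
  θ : ℝ
  CA : ℝ
  ϱ : ℝ
  CΘ : ℝ
  CΘ' : ℝ
  μ : ℝ
  c12 : ℝ
  c22 : ℝ
  c31 : ℝ
  /-- the dispersion relation, as a function of the wavenumber modulus -/
  ν : ℝ → ℝ
  /-- the inverse of the dispersion relation on `[0,∞)` -/
  rr : ℝ → ℝ
  /-- `𝔄(ω) = r(ω)²/ν'(r(ω))` -/
  A : ℝ → ℝ
  /-- `Θ(ω) = r(ω)/ν'(r(ω))` -/
  Th : ℝ → ℝ
  hδ : δ ∈ Set.Ico (1/2 : ℝ) 1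
  hδ' : δ' ∈ Set.Ico (1/2 : ℝ) 1
  hCd : 0 < Cd
  hCd' : 0 < Cd'
  hθ : θ ∈ Set.Ioc (0:ℝ) 1
  hCA : 0 < CA
  hϱ : ϱ ∈ Set.Icc (0:ℝ) 1
  hgap : ϱ < 2*δ - 1/2
  hCΘ : 0 < CΘ
  hCΘ' : 0 < CΘ'
  hμ : 0 ≤ μ
  hc12 : 0 < c12
  hc22 : 0 < c22
  hc31 : 0 ≤ c31
  hν0 : ν 0 = 0
  hνC1 : ContDiffOn ℝ 1 ν (Set.Ici 0)
  hνmono : StrictMonoOn ν (Set.Ici 0)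
  hνbij : Set.BijOn ν (Set.Ici 0) (Set.Ici 0)
  hνlb : ∀ x : ℝ, 0 ≤ x → Cd * x ^ (1/δ) ≤ ν x
  hνub : ∀ x : ℝ, 0 ≤ x → ν x ≤ Cd' * x ^ (1/δ')
  hνsuper : ∀ x : ℝ, 0 ≤ x → ∀ y : ℝ, 0 ≤ y → ν x + ν y ≤ ν (x + y)
  hrr : ∀ ω : ℝ, 0 ≤ ω → 0 ≤ rr ω ∧ ν (rr ω) = ω
  hrr' : ∀ x : ℝ, 0 ≤ x → rr (ν x) = x
  hAdef : ∀ ω : ℝ, 0 ≤ ω → A ω = (rr ω)^2 / derivWithin ν (Set.Ici 0) (rr ω)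
  hThdef : ∀ ω : ℝ, 0 ≤ ω → Th ω = rr ω / derivWithin ν (Set.Ici 0) (rr ω)
  hA0 : A 0 = 0
  hAmono : MonotoneOn A (Set.Ici 0)
  hAbound : ∀ ω : ℝ, 0 ≤ ω → 0 ≤ A ω ∧ A ω ≤ CA * ω ^ θ
  hThcont : ContinuousOn Th (Set.Ici 0)
  hThmono : MonotoneOn Th (Set.Ici 0)
  hThbound : ∀ ω : ℝ, 0 ≤ ω → CΘ' * ω ^ ϱ ≤ Th ω ∧ Th ω ≤ CΘ * ω ^ ϱ

/-- The weak form `ℜ₁[φ]` of the 3-wave collision operator `C₁₂`. -/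
def R1 (P : KineticParams) (G : Measure ℝ) (φ : ℝ → ℝ) : ℝ :=
  P.c12 * ∫ p : ℝ × ℝ, P.A (p.1 + p.2) * (φ (p.1 + p.2) - φ p.1 - φ p.2) ∂(G.prod G)
  - 2 * P.c12 * ∫ p : ℝ × ℝ,
      Set.indicator {q : ℝ × ℝ | q.2 ≤ q.1}
        (fun q => P.A (q.1 - q.2) * (φ q.1 - φ (q.1 - q.2) - φ q.2)) p ∂(G.prod G)

/-- The weak form `ℜ₂[φ]` of the 2↔2 collision operator `C₂₂`;
the variables are `p = (ω, ω₁, ω₂)`. -/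
def R2 (P : KineticParams) (G : Measure ℝ) (φ : ℝ → ℝ) : ℝ :=
  P.c22 * ∫ p : ℝ × ℝ × ℝ,
    Set.indicator {q : ℝ × ℝ × ℝ | q.2.2 ≤ q.1 + q.2.1}
      (fun q =>
        P.Th (q.1 + q.2.1 - q.2.2)
        * (max |q.2.1 - q.2.2| |q.2.2 - q.1| / (2 * (q.1 + q.2.1))) ^ P.μ
        * (min (min (P.rr q.1) (P.rr q.2.1)) (min (P.rr q.2.2) (P.rr (q.1 + q.2.1 - q.2.2)))
            / (P.rr q.1 * P.rr q.2.1 * P.rr q.2.2))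
        * (-(φ q.1) - φ q.2.1 + φ q.2.2 + φ (q.1 + q.2.1 - q.2.2))) p
    ∂(G.prod (G.prod G))

/-- The weak form `ℜ₃[φ]` of the 1↔3 collision operator `C₃₁`. -/
def R3 (P : KineticParams) (G : Measure ℝ) (φ : ℝ → ℝ) : ℝ :=
  P.c31 * ∫ p : ℝ × ℝ × ℝ,
      P.A (p.1 + p.2.1 + p.2.2)
      * (φ (p.1 + p.2.1 + p.2.2) - φ p.1 - φ p.2.1 - φ p.2.2) ∂(G.prod (G.prod G))
  - 3 * P.c31 * ∫ p : ℝ × ℝ × ℝ,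
      Set.indicator {q : ℝ × ℝ × ℝ | q.2.1 + q.2.2 ≤ q.1}
        (fun q => P.A (q.1 - q.2.1 - q.2.2)
          * (φ q.1 - φ (q.1 - q.2.1 - q.2.2) - φ q.2.1 - φ q.2.2)) p ∂(G.prod (G.prod G))

/-- A weak solution of the wave kinetic equation: a measurable family of finite nonnegative
Borel measures on `[0,∞)` such that for every compactly supported `C²` test function `φ`
with `φ'(0) = 0` the map `t ↦ ∫ φ dG(t)` is continuously differentiable on `[0,∞)` with
derivative `ℜ₁[φ] + ℜ₂[φ] + ℜ₃[φ]`. -/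
structure IsWeakSolution (P : KineticParams) (G : ℝ → Measure ℝ) : Prop where
  finite : ∀ t : ℝ, IsFiniteMeasure (G t)
  support : ∀ t : ℝ, G t (Set.Iio 0) = 0
  meas : ∀ B : Set ℝ, MeasurableSet B → Measurable fun t => G t B
  weak : ∀ φ : ℝ → ℝ, ContDiff ℝ 2 φ → HasCompactSupport φ → deriv φ 0 = 0 →
    ∀ t : ℝ, 0 ≤ t →
      HasDerivWithinAt (fun s => ∫ ω, φ ω ∂(G s))
        (R1 P (G t) φ + R2 P (G t) φ + R3 P (G t) φ) (Set.Ici 0) t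
  weak_cont : ∀ φ : ℝ → ℝ, ContDiff ℝ 2 φ → HasCompactSupport φ → deriv φ 0 = 0 →
    ContinuousOn (fun t => R1 P (G t) φ + R2 P (G t) φ + R3 P (G t) φ) (Set.Ici 0)

/-- The initial mass `ℳ`. -/
def mass (G : ℝ → Measure ℝ) : ℝ := (G 0 Set.univ).toReal

/-- The initial energy `ℰ`. -/
def energy (G : ℝ → Measure ℝ) : ℝ := ∫ ω : ℝ, ω ∂(G 0)

/-- `T` is an admissible time horizon: `0 ≤ T < T₀` if the condensation time `T₀` is
positive, and `T = 0` if `T₀ = 0`. -/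
def TOk (G : ℝ → Measure ℝ) (T : ℝ) : Prop :=
  0 ≤ T ∧ (T = 0 ∨ ∃ T' : ℝ, T < T' ∧ ∀ t : ℝ, 0 ≤ t → t < T' → G t {0} = 0)

/-- The initial concentration hypothesis with constants `Cini, r₀` and exponent `cini`. -/
def InitConc (G : ℝ → Measure ℝ) (Cini r₀ cini : ℝ) : Prop :=
  0 < Cini ∧ 0 < r₀ ∧ 0 < cini ∧ G 0 {0} = 0 ∧
    ∀ r : ℝ, 0 < r → r < r₀ → ENNReal.ofReal (Cini * r ^ cini) ≤ G 0 (Set.Icc 0 r)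

end

/-! For `φ ≡ 1` the 2↔2 term vanishes. Let `B` be the kernel `𝔄` extended by zero to negative
arguments and `S = ω₁ + ⋯ + ωₙ`. The other two terms are nonpositive multiples of
`∫ B(S) - n ∫ B(2ω₁ - S)` with `n = 2` and `n = 3`. After symmetrising, the second integrand is
`∑ᵢ B(2ωᵢ - S)`: since `2ωᵢ > S` holds for at most one `i`, at most one summand is nonzero, and by
monotonicity it is at most `B(S)`.

As the Bochner integral of a non-integrable function is `0`, one also has to know that `B(S)` is
integrable whenever `B(2ω₁ - S)` is. Subadditivity of `r` and the power bounds on `Θ` give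
`𝔄(2ω) ≤ K 𝔄(ω)`, hence `B(x + y) ≤ K (B(x) + B(y))`. By Fubini some slice `x ↦ B(x - a)` is
integrable, so `B` is, and therefore so is `B(S)`. -/

section QuasiSubadditive

variable {Ω E : Type*} [MeasurableSpace Ω] [MeasurableSpace E] {m : Measure Ω}
  {B : E → ℝ} {K : ℝ}

theorem integrable_comp_add_of_quasiSubadditive [Add E] [MeasurableAdd₂ E] (hB : Measurable B)
    (hB_nonneg : ∀ x, 0 ≤ B x) (hB_add : ∀ x y, B (x + y) ≤ K * (B x + B y)) {f g : Ω → E}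
    (hf : AEMeasurable f m) (hg : AEMeasurable g m) (hBf : Integrable (fun ω => B (f ω)) m)
    (hBg : Integrable (fun ω => B (g ω)) m) : Integrable (fun ω => B (f ω + g ω)) m := by
  refine ((hBf.add hBg).const_mul K).mono' (hB.comp_aemeasurable (hf.add hg)).aestronglyMeasurable
    (ae_of_all _ fun ω => ?_)
  rw [norm_of_nonneg (hB_nonneg _)]
  exact hB_add (f ω) (g ω)

theorem integrable_comp_sum_of_quasiSubadditive [AddCommMonoid E] [MeasurableAdd₂ E]
    [IsFiniteMeasure m] (hB : Measurable B) (hB_nonneg : ∀ x, 0 ≤ B x)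
    (hB_add : ∀ x y, B (x + y) ≤ K * (B x + B y)) {ι : Type*} (s : Finset ι)
    {f : ι → Ω → E} (hf : ∀ i ∈ s, AEMeasurable (f i) m)
    (hBf : ∀ i ∈ s, Integrable (fun ω => B (f i ω)) m) :
    Integrable (fun ω => B (∑ i ∈ s, f i ω)) m := by
  classical
  induction s using Finset.induction_on with
  | empty => simp only [Finset.sum_empty, integrable_const]
  | insert i s hi ih =>
    rw [Finset.forall_mem_insert] at hf hBf
    simp only [Finset.sum_insert hi]
    exact integrable_comp_add_of_quasiSubadditive hB hB_nonneg hB_add hf.1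
      (Finset.aemeasurable_fun_sum s hf.2) hBf.1 (ih hf.2 hBf.2)

theorem integrable_of_integrable_prod_comp_sub [AddGroup E] [MeasurableAdd₂ E] (hB : Measurable B)
    (hB_nonneg : ∀ x, 0 ≤ B x) (hB_add : ∀ x y, B (x + y) ≤ K * (B x + B y)) {μ : Measure E}
    [IsFiniteMeasure μ] [SFinite m] [NeZero m] {g : Ω → E}
    (h : Integrable (fun p : E × Ω => B (p.1 - g p.2)) (μ.prod m)) : Integrable B μ := by
  obtain ⟨ω, hω⟩ := h.prod_left_ae.exists
  have hshift : AEMeasurable (fun x => x - g ω) μ := by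
    simpa only [sub_eq_add_neg] using (measurable_add_const (-g ω)).aemeasurable
  simpa only [sub_add_cancel] using integrable_comp_add_of_quasiSubadditive hB hB_nonneg hB_add
    hshift aemeasurable_const hω (integrable_const (B (g ω)))

end QuasiSubadditive

theorem integral_pi_comp_perm {ι X F : Type*} [Fintype ι] [MeasurableSpace X]
    [NormedAddCommGroup F] [NormedSpace ℝ F] (μ : Measure X) [SigmaFinite μ] (σ : Equiv.Perm ι)
    (f : (ι → X) → F) :
    ∫ x, f (x ∘ σ) ∂Measure.pi (fun _ => μ) = ∫ x, f x ∂Measure.pi (fun _ => μ) :=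
  (measurePreserving_arrowCongr' (fun _ => μ) (fun _ => μ) σ.symm (MeasurableEquiv.refl X)
    fun _ => MeasurePreserving.id μ).integral_comp' f

theorem integral_prod_prod_eq_integral_pi {X F : Type*} [MeasurableSpace X]
    [NormedAddCommGroup F] [NormedSpace ℝ F] (μ : Measure X) [SigmaFinite μ] (f : X × X × X → F) :
    ∫ p, f p ∂(μ.prod (μ.prod μ)) =
      ∫ x : Fin 3 → X, f (x 0, x 1, x 2) ∂Measure.pi (fun _ => μ) := by
  have h₂ := (MeasurePreserving.id μ).prod (measurePreserving_finTwoArrow μ)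
  have h₃ := measurePreserving_piFinSuccAbove (fun _ : Fin 3 => μ) 0
  rw [← (h₂.integral_comp (MeasurableEmbedding.id.prodMap
    MeasurableEquiv.finTwoArrow.measurableEmbedding)), ← h₃.integral_comp']
  rfl

section MonotoneKernel

variable {B : ℝ → ℝ} {K : ℝ} {μ : Measure ℝ}

theorem sum_comp_two_mul_sub_sum_le {ι : Type*} [Fintype ι] (hB : Monotone B)
    (hB_nonpos : ∀ x ≤ 0, B x = 0) {x : ι → ℝ} (hx : ∀ i, 0 ≤ x i) :
    ∑ i, B (2 * x i - ∑ j, x j) ≤ B (∑ j, x j) := by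
  classical
  by_cases hex : ∃ i, ∑ j, x j < 2 * x i
  · obtain ⟨i, hi⟩ := hex
    have hother : ∀ k ∈ Finset.univ, k ≠ i → B (2 * x k - ∑ j, x j) = 0 := fun k _ hki => by
      have hpair : x k + x i ≤ ∑ j, x j := by
        rw [← Finset.sum_pair hki]
        exact Finset.sum_le_univ_sum_of_nonneg hx
      exact hB_nonpos _ (by linarith)
    have hi_le : x i ≤ ∑ j, x j := Finset.single_le_sum (fun j _ => hx j) (Finset.mem_univ i)
    rw [Finset.sum_eq_single_of_mem i (Finset.mem_univ i) hother]
    exact hB (by linarith)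
  · push Not at hex
    rw [Finset.sum_eq_zero fun i _ => hB_nonpos _ (sub_nonpos.2 (hex i)), ← hB_nonpos 0 le_rfl]
    exact hB (Finset.sum_nonneg fun j _ => hx j)

theorem nonneg_of_monotone_of_eq_zero (hB : Monotone B) (hB_nonpos : ∀ x ≤ 0, B x = 0) (x : ℝ) :
    0 ≤ B x := by
  rw [← hB_nonpos (min x 0) (min_le_right x 0)]
  exact hB (min_le_left x 0)

theorem add_le_mul_add_of_two_mul_le (hB : Monotone B) (hB_nonneg : ∀ x, 0 ≤ B x) (hK : 0 ≤ K)
    (hdouble : ∀ x, B (2 * x) ≤ K * B x) (x y : ℝ) : B (x + y) ≤ K * (B x + B y) :=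
  calc B (x + y) ≤ B (2 * max x y) := hB (by linarith [le_max_left x y, le_max_right x y])
    _ ≤ K * B (max x y) := hdouble _
    _ = K * max (B x) (B y) := by rw [hB.map_max]
    _ ≤ K * (B x + B y) := by
      gcongr
      exact max_le_add_of_nonneg (hB_nonneg x) (hB_nonneg y)

theorem card_mul_integral_comp_two_mul_sub_sum_le {ι : Type*} [Fintype ι] [SigmaFinite μ]
    (hB : Monotone B) (hB_nonpos : ∀ x ≤ 0, B x = 0) (hμ : ∀ᵐ x ∂μ, 0 ≤ x)
    (hsum : Integrable (fun x : ι → ℝ => B (∑ j, x j)) (Measure.pi fun _ => μ)) (i : ι) :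
    Fintype.card ι * ∫ x : ι → ℝ, B (2 * x i - ∑ j, x j) ∂Measure.pi (fun _ => μ) ≤
      ∫ x : ι → ℝ, B (∑ j, x j) ∂Measure.pi (fun _ => μ) := by
  classical
  have hpos : ∀ᵐ x ∂Measure.pi (fun _ : ι => μ), ∀ k, 0 ≤ x k :=
    eventually_all.2 fun k => Measure.tendsto_eval_ae_ae.eventually hμ
  have hint (k : ι) :
      Integrable (fun x : ι → ℝ => B (2 * x k - ∑ j, x j)) (Measure.pi fun _ => μ) := by
    refine hsum.mono' (hB.measurable.comp (by fun_prop)).aestronglyMeasurable ?_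
    filter_upwards [hpos] with x hx
    rw [norm_of_nonneg (nonneg_of_monotone_of_eq_zero hB hB_nonpos _)]
    have hk_le : x k ≤ ∑ j, x j := Finset.single_le_sum (fun j _ => hx j) (Finset.mem_univ k)
    exact hB (by linarith)
  have hsymm (k : ι) : ∫ x, B (2 * x k - ∑ j, x j) ∂Measure.pi (fun _ => μ) =
      ∫ x, B (2 * x i - ∑ j, x j) ∂Measure.pi (fun _ => μ) := by
    rw [← integral_pi_comp_perm μ (Equiv.swap i k)]
    simp only [Function.comp_apply, Equiv.swap_apply_right, Equiv.sum_comp]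
  calc Fintype.card ι * ∫ x, B (2 * x i - ∑ j, x j) ∂Measure.pi (fun _ => μ)
      = ∑ k, ∫ x, B (2 * x k - ∑ j, x j) ∂Measure.pi (fun _ => μ) := by
        simp only [hsymm, Finset.sum_const, Finset.card_univ, nsmul_eq_mul]
    _ = ∫ x, ∑ k, B (2 * x k - ∑ j, x j) ∂Measure.pi (fun _ => μ) :=
        (integral_finsetSum _ fun k _ => hint k).symm
    _ ≤ ∫ x, B (∑ j, x j) ∂Measure.pi (fun _ => μ) := by
        refine integral_mono_ae (integrable_finsetSum _ fun k _ => hint k) hsum ?_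
        filter_upwards [hpos] with x hx using sum_comp_two_mul_sub_sum_le hB hB_nonpos hx

theorem integrable_comp_sum_of_integrable_comp_two_mul_sub_sum [IsFiniteMeasure μ]
    (hB : Measurable B) (hB_nonneg : ∀ x, 0 ≤ B x)
    (hB_add : ∀ x y, B (x + y) ≤ K * (B x + B y)) {n : ℕ} {i : Fin n}
    (hdiff : Integrable (fun x : Fin n → ℝ => B (2 * x i - ∑ j, x j))
      (Measure.pi fun _ => μ)) :
    Integrable (fun x : Fin n → ℝ => B (∑ j, x j)) (Measure.pi fun _ => μ) := by
  have hBμ : Integrable B μ := by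
    obtain ⟨k, rfl⟩ := Nat.exists_eq_succ_of_ne_zero i.pos.ne'
    rcases eq_or_ne μ 0 with rfl | hμ
    · exact integrable_zero_measure
    have : NeZero (Measure.pi fun _ : Fin k => μ) := ⟨by
      rw [← Measure.measure_univ_ne_zero, Measure.pi_univ]
      exact Finset.prod_ne_zero_iff.2 fun _ _ => Measure.measure_univ_ne_zero.2 hμ⟩
    refine integrable_of_integrable_prod_comp_sub (m := Measure.pi fun _ : Fin k => μ)
      (g := fun y => ∑ j, y j) hB hB_nonneg hB_add ?_
    have hmp := measurePreserving_piFinSuccAbove (fun _ : Fin (k + 1) => μ) i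
    rw [← hmp.integrable_comp_emb (MeasurableEquiv.measurableEmbedding _)]
    refine hdiff.congr (ae_of_all _ fun x => congrArg B ?_)
    rw [Fin.sum_univ_succAbove x i, two_mul, add_sub_add_left_eq_sub]
    rfl
  exact integrable_comp_sum_of_quasiSubadditive hB hB_nonneg hB_add _
    (fun j _ => (measurable_pi_apply j).aemeasurable) fun j _ => integrable_comp_eval hBμ

theorem nat_mul_integral_comp_two_mul_sub_sum_le [IsFiniteMeasure μ] (hB : Monotone B)
    (hB_nonpos : ∀ x ≤ 0, B x = 0) (hB_add : ∀ x y, B (x + y) ≤ K * (B x + B y))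
    (hμ : ∀ᵐ x ∂μ, 0 ≤ x) {n : ℕ} (i : Fin n) :
    n * ∫ x : Fin n → ℝ, B (2 * x i - ∑ j, x j) ∂Measure.pi (fun _ => μ) ≤
      ∫ x : Fin n → ℝ, B (∑ j, x j) ∂Measure.pi (fun _ => μ) := by
  have hB_nonneg := nonneg_of_monotone_of_eq_zero hB hB_nonpos
  by_cases hdiff : Integrable (fun x : Fin n → ℝ => B (2 * x i - ∑ j, x j))
    (Measure.pi fun _ => μ)
  · have hsum := integrable_comp_sum_of_integrable_comp_two_mul_sub_sum hB.measurable hB_nonneg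
      hB_add hdiff
    simpa only [Fintype.card_fin] using
      card_mul_integral_comp_two_mul_sub_sum_le hB hB_nonpos hμ hsum i
  · rw [integral_undef hdiff, mul_zero]
    exact integral_nonneg fun x => hB_nonneg _

theorem two_mul_integral_comp_sub_le [IsFiniteMeasure μ] (hB : Monotone B)
    (hB_nonpos : ∀ x ≤ 0, B x = 0) (hB_add : ∀ x y, B (x + y) ≤ K * (B x + B y))
    (hμ : ∀ᵐ x ∂μ, 0 ≤ x) :
    2 * ∫ p : ℝ × ℝ, B (p.1 - p.2) ∂(μ.prod μ) ≤ ∫ p : ℝ × ℝ, B (p.1 + p.2) ∂(μ.prod μ) := by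
  have h := nat_mul_integral_comp_two_mul_sub_sum_le hB hB_nonpos hB_add hμ (0 : Fin 2)
  simp only [Nat.cast_ofNat, Fin.sum_univ_two, two_mul ((_ : Fin 2 → ℝ) 0),
    add_sub_add_left_eq_sub] at h
  rw [← (measurePreserving_finTwoArrow μ).integral_comp',
    ← (measurePreserving_finTwoArrow μ).integral_comp']
  exact h

theorem three_mul_integral_comp_sub_le [IsFiniteMeasure μ] (hB : Monotone B)
    (hB_nonpos : ∀ x ≤ 0, B x = 0) (hB_add : ∀ x y, B (x + y) ≤ K * (B x + B y))
    (hμ : ∀ᵐ x ∂μ, 0 ≤ x) :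
    3 * ∫ p : ℝ × ℝ × ℝ, B (p.1 - p.2.1 - p.2.2) ∂(μ.prod (μ.prod μ)) ≤
      ∫ p : ℝ × ℝ × ℝ, B (p.1 + p.2.1 + p.2.2) ∂(μ.prod (μ.prod μ)) := by
  have h := nat_mul_integral_comp_two_mul_sub_sum_le hB hB_nonpos hB_add hμ (0 : Fin 3)
  simp only [Nat.cast_ofNat, Fin.sum_univ_three, two_mul, add_assoc, add_sub_add_left_eq_sub] at h
  simp only [integral_prod_prod_eq_integral_pi, sub_sub, add_assoc]
  exact h

end MonotoneKernel

namespace KineticParams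

variable (P : KineticParams)

/-- The kernel `𝔄` extended by `0` to negative frequencies, so that the constraints
`ω₁ ≥ ω₂` and `ω₁ ≥ ω₂ + ω₃` in the collision operators are absorbed into the kernel. -/
def extA (x : ℝ) : ℝ := P.A (max x 0)

theorem extA_of_nonneg {x : ℝ} (hx : 0 ≤ x) : P.extA x = P.A x := by
  rw [extA, max_eq_left hx]

theorem extA_of_nonpos {x : ℝ} (hx : x ≤ 0) : P.extA x = 0 := by
  rw [extA, max_eq_right hx, P.hA0]

theorem extA_monotone : Monotone P.extA := fun x y h =>
  P.hAmono (le_max_right x 0) (le_max_right y 0) (max_le_max_right 0 h)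

theorem indicator_A_mul_const {α : Type*} {f g : α → ℝ} (c : ℝ) (q : α) :
    indicator {q | g q ≤ f q} (fun q => P.A (f q - g q) * c) q = c * P.extA (f q - g q) := by
  by_cases h : q ∈ {q | g q ≤ f q}
  · rw [indicator_of_mem h, P.extA_of_nonneg (sub_nonneg.2 h), mul_comm]
  · rw [indicator_of_notMem h, P.extA_of_nonpos (sub_nonpos.2 (le_of_not_ge h)), mul_zero]

theorem rr_add_le {x y : ℝ} (hx : 0 ≤ x) (hy : 0 ≤ y) : P.rr (x + y) ≤ P.rr x + P.rr y := by
  obtain ⟨hrx, hνx⟩ := P.hrr x hx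
  obtain ⟨hry, hνy⟩ := P.hrr y hy
  obtain ⟨hrxy, hνxy⟩ := P.hrr (x + y) (add_nonneg hx hy)
  rw [← P.hνmono.le_iff_le hrxy (add_nonneg hrx hry), hνxy]
  simpa only [hνx, hνy] using P.hνsuper _ hrx _ hry

theorem A_eq_rr_mul_Th {ω : ℝ} (hω : 0 ≤ ω) : P.A ω = P.rr ω * P.Th ω := by
  rw [P.hAdef ω hω, P.hThdef ω hω, sq, mul_div_assoc]

theorem Th_nonneg {ω : ℝ} (hω : 0 ≤ ω) : 0 ≤ P.Th ω :=
  (mul_nonneg P.hCΘ'.le (rpow_nonneg hω _)).trans (P.hThbound ω hω).1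

theorem Th_two_mul_le {ω : ℝ} (hω : 0 ≤ ω) :
    P.Th (2 * ω) ≤ P.CΘ * 2 ^ P.ϱ / P.CΘ' * P.Th ω := by
  have hCΘ := P.hCΘ
  have hCΘ' := P.hCΘ'
  calc P.Th (2 * ω) ≤ P.CΘ * (2 * ω) ^ P.ϱ := (P.hThbound _ (by positivity)).2
    _ = P.CΘ * 2 ^ P.ϱ / P.CΘ' * (P.CΘ' * ω ^ P.ϱ) := by
      rw [mul_rpow zero_le_two hω]
      field_simp
    _ ≤ P.CΘ * 2 ^ P.ϱ / P.CΘ' * P.Th ω := by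
      gcongr
      exact (P.hThbound ω hω).1

theorem A_two_mul_le {ω : ℝ} (hω : 0 ≤ ω) :
    P.A (2 * ω) ≤ 2 * (P.CΘ * 2 ^ P.ϱ / P.CΘ') * P.A ω := by
  have h2ω : 0 ≤ 2 * ω := mul_nonneg zero_le_two hω
  have hrr : P.rr (2 * ω) ≤ 2 * P.rr ω := by simpa only [two_mul] using P.rr_add_le hω hω
  calc P.A (2 * ω) = P.rr (2 * ω) * P.Th (2 * ω) := P.A_eq_rr_mul_Th h2ω
    _ ≤ (2 * P.rr ω) * (P.CΘ * 2 ^ P.ϱ / P.CΘ' * P.Th ω) :=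
      mul_le_mul hrr (P.Th_two_mul_le hω) (P.Th_nonneg h2ω)
        (mul_nonneg zero_le_two (P.hrr ω hω).1)
    _ = 2 * (P.CΘ * 2 ^ P.ϱ / P.CΘ') * P.A ω := by
      rw [P.A_eq_rr_mul_Th hω]
      ring

theorem exists_extA_add_le : ∃ K, ∀ x y, P.extA (x + y) ≤ K * (P.extA x + P.extA y) := by
  have hCΘ := P.hCΘ
  have hCΘ' := P.hCΘ'
  refine ⟨2 * (P.CΘ * 2 ^ P.ϱ / P.CΘ'), add_le_mul_add_of_two_mul_le P.extA_monotone
    (nonneg_of_monotone_of_eq_zero P.extA_monotone fun _ => P.extA_of_nonpos) (by positivity) ?_⟩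
  intro x
  rcases le_total x 0 with hx | hx
  · rw [P.extA_of_nonpos hx, P.extA_of_nonpos (by linarith), mul_zero]
  · rw [P.extA_of_nonneg hx, P.extA_of_nonneg (by positivity)]
    exact P.A_two_mul_le hx

end KineticParams

section ConstantTestFunction

variable (P : KineticParams) {μ : Measure ℝ}

theorem R1_one_eq [SFinite μ] (hμ : ∀ᵐ x ∂μ, 0 ≤ x) :
    R1 P μ (fun _ => 1) = -P.c12 * (∫ p : ℝ × ℝ, P.extA (p.1 + p.2) ∂(μ.prod μ)
      - 2 * ∫ p : ℝ × ℝ, P.extA (p.1 - p.2) ∂(μ.prod μ)) := by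
  have hgain : ∫ p : ℝ × ℝ, P.A (p.1 + p.2) * ((1 : ℝ) - 1 - 1) ∂(μ.prod μ) =
      (1 - 1 - 1) * ∫ p : ℝ × ℝ, P.extA (p.1 + p.2) ∂(μ.prod μ) := by
    rw [integral_mul_const, mul_comm]
    congr 1
    refine integral_congr_ae ?_
    filter_upwards [Measure.quasiMeasurePreserving_fst.ae hμ,
      Measure.quasiMeasurePreserving_snd.ae hμ] with p h₁ h₂
    rw [P.extA_of_nonneg (add_nonneg h₁ h₂)]
  simp only [R1, hgain, P.indicator_A_mul_const, integral_const_mul]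
  ring

theorem R2_one (μ : Measure ℝ) : R2 P μ (fun _ => 1) = 0 := by
  simp [R2]

theorem R3_one_eq [SFinite μ] (hμ : ∀ᵐ x ∂μ, 0 ≤ x) :
    R3 P μ (fun _ => 1) =
      -2 * P.c31 * (∫ p : ℝ × ℝ × ℝ, P.extA (p.1 + p.2.1 + p.2.2) ∂(μ.prod (μ.prod μ))
        - 3 * ∫ p : ℝ × ℝ × ℝ, P.extA (p.1 - p.2.1 - p.2.2) ∂(μ.prod (μ.prod μ))) := by
  have hgain : ∫ p : ℝ × ℝ × ℝ, P.A (p.1 + p.2.1 + p.2.2) * ((1 : ℝ) - 1 - 1 - 1)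
      ∂(μ.prod (μ.prod μ)) =
      (1 - 1 - 1 - 1) * ∫ p : ℝ × ℝ × ℝ, P.extA (p.1 + p.2.1 + p.2.2) ∂(μ.prod (μ.prod μ)) := by
    rw [integral_mul_const, mul_comm]
    congr 1
    refine integral_congr_ae ?_
    filter_upwards [Measure.quasiMeasurePreserving_fst.ae hμ,
      Measure.quasiMeasurePreserving_snd.ae (Measure.quasiMeasurePreserving_fst.ae hμ),
      Measure.quasiMeasurePreserving_snd.ae (Measure.quasiMeasurePreserving_snd.ae hμ)]
      with p h₁ h₂ h₃
    rw [P.extA_of_nonneg (add_nonneg (add_nonneg h₁ h₂) h₃)]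
  simp only [R3, hgain, sub_sub (_ : ℝ × ℝ × ℝ).1, P.indicator_A_mul_const, integral_const_mul]
  ring

variable [IsFiniteMeasure μ]

theorem R1_one_nonpos (hμ : ∀ᵐ x ∂μ, 0 ≤ x) : R1 P μ (fun _ => 1) ≤ 0 := by
  obtain ⟨K, hK⟩ := P.exists_extA_add_le
  rw [R1_one_eq P hμ]
  exact mul_nonpos_of_nonpos_of_nonneg (neg_nonpos.2 P.hc12.le) (sub_nonneg.2
    (two_mul_integral_comp_sub_le P.extA_monotone (fun _ => P.extA_of_nonpos) hK hμ))

theorem R3_one_nonpos (hμ : ∀ᵐ x ∂μ, 0 ≤ x) : R3 P μ (fun _ => 1) ≤ 0 := by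
  obtain ⟨K, hK⟩ := P.exists_extA_add_le
  rw [R3_one_eq P hμ]
  exact mul_nonpos_of_nonpos_of_nonneg (by linarith [P.hc31]) (sub_nonneg.2
    (three_mul_integral_comp_sub_le P.extA_monotone (fun _ => P.extA_of_nonpos) hK hμ))

theorem R1_add_R2_add_R3_one_nonpos (hμ : μ (Iio 0) = 0) :
    R1 P μ (fun _ => 1) + R2 P μ (fun _ => 1) + R3 P μ (fun _ => 1) ≤ 0 := by
  have hμ_nonneg : ∀ᵐ x ∂μ, 0 ≤ x := by
    simpa only [ae_iff, not_le, Iio_def] using hμ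
  linarith [R1_one_nonpos P hμ_nonneg, R2_one P μ, R3_one_nonpos P hμ_nonneg]

end ConstantTestFunction

theorem mass_nonincrease_general (P : KineticParams) {G : ℝ → Measure ℝ}
    (hfin : ∀ t, 0 ≤ t → IsFiniteMeasure (G t)) (hsupp : ∀ t, 0 ≤ t → G t (Iio 0) = 0)
    (hext : ∀ t, 0 ≤ t → HasDerivWithinAt (fun s => (G s univ).toReal)
      (R1 P (G t) (fun _ => 1) + R2 P (G t) (fun _ => 1) + R3 P (G t) (fun _ => 1)) (Ici 0) t) :
    AntitoneOn (fun t => G t univ) (Ici 0) := by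
  have hanti : AntitoneOn (fun t => (G t univ).toReal) (Ici 0) :=
    antitoneOn_of_hasDerivWithinAt_nonpos (convex_Ici 0)
      (fun t ht => (hext t ht).continuousWithinAt)
      (fun t ht => (hext t (interior_subset ht)).mono interior_subset)
      fun t ht => by
        have := hfin t (interior_subset ht)
        exact R1_add_R2_add_R3_one_nonpos P (hsupp t (interior_subset ht))
  intro s hs t ht hst
  have := hfin s hs
  have := hfin t ht
  exact (ENNReal.toReal_le_toReal (measure_ne_top _ _) (measure_ne_top _ _)).1 (hanti hs ht hst)

/-- **Mass non-increase** (Lemma 4.2): if the weak formulation of a weak solution extends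
to the constant test function `φ ≡ 1`, i.e. the total mass `t ↦ G(t)([0,∞))` is
differentiable with derivative `ℜ₁[1] + ℜ₂[1] + ℜ₃[1]`, then the mass is non-increasing:
`G(t)([0,∞)) ≤ G(0)([0,∞))` for all `t ≥ 0`. -/
theorem mass_nonincrease (P : KineticParams) (G : ℝ → MeasureTheory.Measure ℝ)
    (hG : IsWeakSolution P G)
    (hext : ∀ t : ℝ, 0 ≤ t →
      HasDerivWithinAt (fun s => ((G s) Set.univ).toReal)
        (R1 P (G t) (fun _ => 1) + R2 P (G t) (fun _ => 1) + R3 P (G t) (fun _ => 1))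
        (Set.Ici 0) t) :
    ∀ t : ℝ, 0 ≤ t → G t Set.univ ≤ G 0 Set.univ :=
  fun _ ht => mass_nonincrease_general P (fun s _ => hG.finite s) (fun s _ => hG.support s) hext
    self_mem_Ici ht ht
end

section
/- Mass dissipation inequalities for the 3-wave and 1↔3 collision terms (proof of Lemma 4.2): Let 𝔄 : [0,∞) → [0,∞) be nondecreasing with 𝔄(0) = 0, and let H be a finite nonnegative Borel measure on [0,∞). Then ∬_{[0,∞)²} 𝔄(ω₁+ω₂) dH(ω₁) dH(ω₂) ≥ 2 ∬_{{(ω₁,ω₂) : ω₁ ≥ ω₂}} 𝔄(ω₁−ω₂) dH(ω₁) dH(ω₂), and ∭_{[0,∞)³} 𝔄(ω₁+ω₂+ω₃) dH(ω₁) dH(ω₂) dH(ω₃) ≥ 3 ∭_{{(ω₁,ω₂,ω₃) : ω₁ ≥ ω₂+ω₃}} 𝔄(ω₁−ω₂−ω₃) dH(ω₁) dH(ω₂) dH(ω₃). -/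
open MeasureTheory Set

/-!
Extend `A` by zero to `(-∞, 0)`; this keeps it monotone. The outgoing frequencies
`yᵢ = ωᵢ - ∑_{j ≠ i} ωⱼ` satisfy `yᵢ + yⱼ = -2 ∑_{k ≠ i, j} ωₖ ≤ 0` for `i ≠ j`, so at most one of
them is positive, and each is at most `∑ ωⱼ`. Hence `∑ᵢ A(yᵢ) ≤ A(∑ ωⱼ)` pointwise. The product
measure is invariant under cyclic permutation of the coordinates, so all the terms on the left have
the same integral.
-/

open scoped ENNReal

theorem monotone_indicator_Ici {α β : Type*} [Preorder α] [Preorder β] [Zero β] {f : α → β} {a : α}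
    (hf : MonotoneOn f (Ici a)) (hf0 : ∀ x ∈ Ici a, 0 ≤ f x) : Monotone ((Ici a).indicator f) := by
  intro x y hxy
  by_cases hx : x ∈ Ici a
  · have hy : y ∈ Ici a := le_trans hx hxy
    simpa only [indicator_of_mem, hx, hy] using hf hx hy hxy
  · rw [indicator_of_notMem hx]
    exact indicator_apply_nonneg (hf0 y)

theorem sum_le_of_pairwise_add_nonpos {ι G M : Type*} [AddCommMonoid G] [LinearOrder G]
    [IsOrderedAddMonoid G] [AddCommMonoid M] [PartialOrder M] [CanonicallyOrderedAdd M]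
    {B : G → M} (hB : Monotone B) (hB0 : B 0 = 0) {t : Finset ι} {y : ι → G} {s : G}
    (hpair : (t : Set ι).Pairwise fun i j => y i + y j ≤ 0) (hle : ∀ i ∈ t, y i ≤ s) :
    ∑ i ∈ t, B (y i) ≤ B s := by
  have hB_nonpos {x : G} (hx : x ≤ 0) : B x = 0 :=
    le_antisymm ((hB hx).trans_eq hB0) zero_le
  by_cases hpos : ∃ i ∈ t, 0 < y i
  · obtain ⟨i, hi, hyi⟩ := hpos
    have hother : ∀ j ∈ t, j ≠ i → B (y j) = 0 := fun j hj hji =>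
      hB_nonpos ((le_add_of_nonneg_right hyi.le).trans (hpair hj hi hji))
    rw [Finset.sum_eq_single_of_mem i hi hother]
    exact hB (hle i hi)
  · push Not at hpos
    rw [Finset.sum_eq_zero fun i hi => hB_nonpos (hpos i hi)]
    exact zero_le

section Symmetrization

variable {α : Type*} [MeasurableSpace α] {μ : Measure α} {T : α → α} {n : ℕ}

theorem mul_lintegral_le_of_sum_iterate_le (hT : MeasurePreserving T μ μ) {f g : α → ℝ≥0∞}
    (hf : Measurable f) (hfg : ∀ᵐ x ∂μ, ∑ i ∈ Finset.range n, f (T^[i] x) ≤ g x) :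
    n * ∫⁻ x, f x ∂μ ≤ ∫⁻ x, g x ∂μ :=
  calc n * ∫⁻ x, f x ∂μ = ∑ i ∈ Finset.range n, ∫⁻ x, f (T^[i] x) ∂μ := by
        simp only [(hT.iterate _).lintegral_comp hf, Finset.sum_const, Finset.card_range,
          nsmul_eq_mul]
    _ = ∫⁻ x, ∑ i ∈ Finset.range n, f (T^[i] x) ∂μ :=
        (lintegral_finsetSum _ fun i _ => hf.comp (hT.iterate i).measurable).symm
    _ ≤ ∫⁻ x, g x ∂μ := lintegral_mono_ae hfg

theorem mul_setLIntegral_nonneg_le_of_pairwise_add_nonpos (hT : MeasurePreserving T μ μ)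
    {A : ℝ → ℝ≥0∞} (hA : MonotoneOn A (Ici 0)) (hA0 : A 0 = 0) {y s : α → ℝ} (hy : Measurable y)
    (hpair : ∀ᵐ x ∂μ,
      (Finset.range n : Set ℕ).Pairwise fun i j => y (T^[i] x) + y (T^[j] x) ≤ 0)
    (hle : ∀ᵐ x ∂μ, ∀ i ∈ Finset.range n, y (T^[i] x) ≤ s x) :
    n * ∫⁻ x in {x | 0 ≤ y x}, A (y x) ∂μ ≤ ∫⁻ x, A (s x) ∂μ := by
  let B : ℝ → ℝ≥0∞ := (Ici 0).indicator A
  have hB : Monotone B := monotone_indicator_Ici hA fun _ _ => zero_le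
  have hB0 : B 0 = 0 := (indicator_of_mem self_mem_Ici A).trans hA0
  calc n * ∫⁻ x in {x | 0 ≤ y x}, A (y x) ∂μ = n * ∫⁻ x, B (y x) ∂μ := by
        rw [← lintegral_indicator (measurableSet_le measurable_const hy)]
        rfl
    _ ≤ ∫⁻ x, B (s x) ∂μ := by
        refine mul_lintegral_le_of_sum_iterate_le hT (hB.measurable.comp hy) ?_
        filter_upwards [hpair, hle] with x hpair hle
          using sum_le_of_pairwise_add_nonpos hB hB0 hpair hle
    _ ≤ ∫⁻ x, A (s x) ∂μ := lintegral_mono fun x => indicator_le_self _ A (s x)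

end Symmetrization

section Prod

variable {α β γ : Type*} [MeasurableSpace α] [MeasurableSpace β] [MeasurableSpace γ]

theorem ae_prod_and {μ : Measure α} {ν : Measure β} {p : α → Prop} {q : β → Prop}
    (hp : ∀ᵐ x ∂μ, p x) (hq : ∀ᵐ y ∂ν, q y) : ∀ᵐ z ∂μ.prod ν, p z.1 ∧ q z.2 :=
  (Measure.quasiMeasurePreserving_fst.ae hp).and (Measure.quasiMeasurePreserving_snd.ae hq)

theorem measurePreserving_prod_rotate (μ : Measure α) (ν : Measure β) (τ : Measure γ)
    [SFinite μ] [SFinite ν] [SFinite τ] :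
    MeasurePreserving (fun p : α × β × γ => (p.2.1, p.2.2, p.1))
      (μ.prod (ν.prod τ)) (ν.prod (τ.prod μ)) :=
  (measurePreserving_prodAssoc ν τ μ).comp Measure.measurePreserving_swap

end Prod

section Dissipation

variable {A : ℝ → ℝ≥0∞} {H : Measure ℝ} [SFinite H]

theorem two_mul_setLIntegral_sub_le_lintegral_add (hA : MonotoneOn A (Ici 0)) (hA0 : A 0 = 0)
    (hH : ∀ᵐ x ∂H, 0 ≤ x) :
    2 * ∫⁻ p : ℝ × ℝ in {q | q.2 ≤ q.1}, A (p.1 - p.2) ∂H.prod H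
      ≤ ∫⁻ p : ℝ × ℝ, A (p.1 + p.2) ∂H.prod H := by
  have hnonneg := ae_prod_and hH hH
  simp only [← sub_nonneg (b := Prod.snd _)]
  refine mul_setLIntegral_nonneg_le_of_pairwise_add_nonpos (n := 2)
    Measure.measurePreserving_swap hA hA0 (by fun_prop) ?_ ?_
  · refine .of_forall fun p i hi j hj hij => ?_
    rw [Finset.coe_range, mem_Iio] at hi hj
    interval_cases i <;> interval_cases j <;>
      grind [Function.iterate_zero_apply, Function.iterate_succ_apply]
  · filter_upwards [hnonneg] with p ⟨hx, hy⟩ i hi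
    rw [Finset.mem_range] at hi
    interval_cases i <;> grind [Function.iterate_zero_apply, Function.iterate_succ_apply]

theorem three_mul_setLIntegral_sub_sub_le_lintegral_add_add (hA : MonotoneOn A (Ici 0))
    (hA0 : A 0 = 0) (hH : ∀ᵐ x ∂H, 0 ≤ x) :
    3 * ∫⁻ p : ℝ × ℝ × ℝ in {q | q.2.1 + q.2.2 ≤ q.1}, A (p.1 - p.2.1 - p.2.2)
        ∂H.prod (H.prod H)
      ≤ ∫⁻ p : ℝ × ℝ × ℝ, A (p.1 + p.2.1 + p.2.2) ∂H.prod (H.prod H) := by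
  have hnonneg := ae_prod_and hH (ae_prod_and hH hH)
  simp only [← sub_nonneg (b := _ + _), ← sub_sub]
  refine mul_setLIntegral_nonneg_le_of_pairwise_add_nonpos (n := 3)
    (measurePreserving_prod_rotate H H H) hA hA0 (by fun_prop) ?_ ?_
  · filter_upwards [hnonneg] with p ⟨hx, hy, hz⟩ i hi j hj hij
    rw [Finset.coe_range, mem_Iio] at hi hj
    interval_cases i <;> interval_cases j <;>
      grind [Function.iterate_zero_apply, Function.iterate_succ_apply]
  · filter_upwards [hnonneg] with p ⟨hx, hy, hz⟩ i hi
    rw [Finset.mem_range] at hi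
    interval_cases i <;> grind [Function.iterate_zero_apply, Function.iterate_succ_apply]

theorem mass_dissipation_general (hA : MonotoneOn A (Ici 0)) (hA0 : A 0 = 0)
    (hsupp : H (Iio 0) = 0) :
    (2 * ∫⁻ p : ℝ × ℝ in {q | q.2 ≤ q.1}, A (p.1 - p.2) ∂H.prod H
      ≤ ∫⁻ p : ℝ × ℝ, A (p.1 + p.2) ∂H.prod H) ∧
    (3 * ∫⁻ p : ℝ × ℝ × ℝ in {q | q.2.1 + q.2.2 ≤ q.1}, A (p.1 - p.2.1 - p.2.2)
        ∂H.prod (H.prod H)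
      ≤ ∫⁻ p : ℝ × ℝ × ℝ, A (p.1 + p.2.1 + p.2.2) ∂H.prod (H.prod H)) := by
  have hH : ∀ᵐ x ∂H, 0 ≤ x := by simpa only [ae_iff, not_le] using! hsupp
  exact ⟨two_mul_setLIntegral_sub_le_lintegral_add hA hA0 hH,
    three_mul_setLIntegral_sub_sub_le_lintegral_add_add hA hA0 hH⟩

end Dissipation

/-- **Mass dissipation inequalities** for the 3-wave and 1↔3 collision terms (proof of
Lemma 4.2): for a nondecreasing `𝔄 : [0,∞) → [0,∞)` with `𝔄(0) = 0` and a finite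
nonnegative Borel measure `H` on `[0,∞)`,
`∬ 𝔄(ω₁+ω₂) dH dH ≥ 2 ∬_{ω₁≥ω₂} 𝔄(ω₁−ω₂) dH dH` and
`∭ 𝔄(ω₁+ω₂+ω₃) dH dH dH ≥ 3 ∭_{ω₁≥ω₂+ω₃} 𝔄(ω₁−ω₂−ω₃) dH dH dH`. -/
theorem mass_dissipation (A : ℝ → ℝ)
    (hAmono : MonotoneOn A (Set.Ici 0)) (hA0 : A 0 = 0)
    (hApos : ∀ x : ℝ, 0 ≤ x → 0 ≤ A x)
    (H : Measure ℝ) (hfin : IsFiniteMeasure H) (hsupp : H (Set.Iio 0) = 0) :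
    (2 * ∫⁻ p : ℝ × ℝ in {q : ℝ × ℝ | q.2 ≤ q.1},
        ENNReal.ofReal (A (p.1 - p.2)) ∂(H.prod H)
      ≤ ∫⁻ p : ℝ × ℝ, ENNReal.ofReal (A (p.1 + p.2)) ∂(H.prod H)) ∧
    (3 * ∫⁻ p : ℝ × ℝ × ℝ in {q : ℝ × ℝ × ℝ | q.2.1 + q.2.2 ≤ q.1},
        ENNReal.ofReal (A (p.1 - p.2.1 - p.2.2)) ∂(H.prod (H.prod H))
      ≤ ∫⁻ p : ℝ × ℝ × ℝ,
          ENNReal.ofReal (A (p.1 + p.2.1 + p.2.2)) ∂(H.prod (H.prod H))) :=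
  mass_dissipation_general (ENNReal.ofReal_mono.comp_monotoneOn hAmono)
    (by rw [Function.comp_apply, hA0, ENNReal.ofReal_zero]) hsupp
end

section
/- Supersolution lemma (Lemma 7.1): Let T₁ > 0 and let 𝒦 : [0,T₁] × [0,∞) → [0,∞) be measurable such that for each t the function z ↦ 𝒦(t,z)(1+z) is integrable on [0,∞) and the map t ↦ ∫₀^∞ 𝒦(t,z) z dz is continuous on [0,T₁]. Let 𝒫 : [0,∞) → [0,∞) be bounded, continuously differentiable and convex (equivalently, 𝒫′(z₁+z₂) ≥ 𝒫′(z₁) for all z₁, z₂ ≥ 0). Define 𝕏(t) = ∫_t^{T₁} ∫₀^∞ 𝒦(s,z) z dz ds, 𝕐(t) = ∫₀^t ∫₀^∞ 𝒦(s,z) z dz ds, and ψ(t,x) = e^{𝕐(t)} 𝒫(𝕏(t) + x). Then ψ is a supersolution of the transport-jump equation: for every t ∈ (0,T₁) and every x ≥ 0, ∂_t ψ(t,x) + ∫₀^∞ 𝒦(t,z)(ψ(t,x+z) − ψ(t,x)) dz ≥ 0. -/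
open MeasureTheory Set Real

noncomputable section

/-- `𝕏(t) = ∫_t^{T₁} ∫₀^∞ 𝒦(s,z) z dz ds`. -/
def XX (K : ℝ → ℝ → ℝ) (T₁ t : ℝ) : ℝ :=
  ∫ s in t..T₁, ∫ z in Set.Ici (0:ℝ), K s z * z

/-- `𝕐(t) = ∫₀^t ∫₀^∞ 𝒦(s,z) z dz ds`. -/
def YY (K : ℝ → ℝ → ℝ) (t : ℝ) : ℝ :=
  ∫ s in (0:ℝ)..t, ∫ z in Set.Ici (0:ℝ), K s z * z

/-- `ψ(t,x) = e^{𝕐(t)} 𝒫(𝕏(t) + x)`. -/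
def superSol (K : ℝ → ℝ → ℝ) (T₁ : ℝ) (P : ℝ → ℝ) (t x : ℝ) : ℝ :=
  Real.exp (YY K t) * P (XX K T₁ t + x)

end

/-!
Write `a(t) = ∫₀^∞ 𝒦(t,z) z dz` and `w = 𝕏(t) + x ≥ 0`. Since `𝕐' = a` and `𝕏' = -a`, the chain rule
gives `∂_t ψ = e^𝕐 a (𝒫(w) - 𝒫'(w))`. Convexity puts `𝒫` above its tangent at `w`, so the jump term
is at least `e^𝕐 a 𝒫'(w)`. The two derivative terms cancel and `e^𝕐 a 𝒫(w) ≥ 0` remains.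

The jump term is finite because the slopes of `𝒫` from `w` lie between `𝒫'(w)` and the linear
growth rate of `𝒫`, so that the jumps are dominated by a multiple of `z`.
-/

section Convex

variable {f : ℝ → ℝ} {a : ℝ}

lemma convexOn_Ici_of_deriv_le_deriv_add (hf : Differentiable ℝ f)
    (hmono : ∀ x, a ≤ x → ∀ h, 0 ≤ h → deriv f x ≤ deriv f (x + h)) :
    ConvexOn ℝ (Ici a) f := by
  refine MonotoneOn.convexOn_of_deriv (convex_Ici a) hf.continuous.continuousOn
    hf.differentiableOn fun x hx y _ hxy => ?_
  simpa only [add_sub_cancel] using hmono x (interior_subset hx) (y - x) (sub_nonneg.2 hxy)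

lemma slope_le_of_convexOn_Ici_of_le_add_mul {A B x y : ℝ} (hf : ConvexOn ℝ (Ici a) f)
    (hgrowth : ∀ u, a ≤ u → f u ≤ A + B * u) (hx : a ≤ x) (hxy : x < y) :
    slope f x y ≤ B := by
  have hlim : Filter.Tendsto (fun u => B + (A + B * x - f x) / (u - x)) Filter.atTop (nhds B) := by
    simpa only [add_zero, id, ← sub_eq_add_neg] using tendsto_const_nhds.add
      (tendsto_const_nhds.div_atTop (Filter.tendsto_atTop_add_const_right _ (-x) Filter.tendsto_id))
  refine ge_of_tendsto hlim ?_
  filter_upwards [Filter.eventually_ge_atTop y] with u hyu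
  have hxu : 0 < u - x := by linarith
  calc slope f x y ≤ slope f x u :=
        hf.monotoneOn_slope_gt hx ⟨hx.trans hxy.le, hxy⟩
          ⟨hx.trans (hxy.le.trans hyu), hxy.trans_le hyu⟩ hyu
    _ = (f u - f x) / (u - x) := slope_def_field f x u
    _ ≤ (A + B * u - f x) / (u - x) := by
        gcongr
        exact hgrowth u (by linarith)
    _ = B + (A + B * x - f x) / (u - x) := by
        field_simp
        ring

end Convex

section Jump

variable {μ : Measure ℝ} {k f : ℝ → ℝ} {w : ℝ}

lemma integrableOn_mul_self_of_mul_one_add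
    (hk : IntegrableOn (fun z => k z * (1 + z)) (Ici 0) μ) :
    IntegrableOn (fun z => k z * z) (Ici 0) μ := by
  have hratio : ∀ᵐ z ∂μ.restrict (Ici 0), ‖z / (1 + z)‖ ≤ 1 := by
    filter_upwards [ae_restrict_mem measurableSet_Ici] with z (hz : 0 ≤ z)
    rw [Real.norm_of_nonneg (by positivity), div_le_one (by positivity)]
    linarith
  refine IntegrableOn.congr_fun
    (hk.mul_bdd (by fun_prop : Measurable fun z : ℝ => z / (1 + z)).aestronglyMeasurable hratio)
    (fun z (hz : 0 ≤ z) => ?_) measurableSet_Ici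
  field_simp

lemma integrableOn_mul_sub_of_slope_mem_Icc {m B : ℝ}
    (hk : IntegrableOn (fun z => k z * z) (Ici 0) μ) (hf : ContinuousOn f (Ici w))
    (hslope : ∀ y, w < y → slope f w y ∈ Icc m B) :
    IntegrableOn (fun z => k z * (f (w + z) - f w)) (Ici 0) μ := by
  have hmeas : AEStronglyMeasurable (fun z => slope f w (w + z)) (μ.restrict (Ici 0)) := by
    have hshift : ContinuousOn (fun z => f (w + z)) (Ici 0) :=
      hf.comp (by fun_prop) fun z hz => mem_Ici.2 (le_add_of_nonneg_right hz)
    simp only [slope_def_field, add_sub_cancel_left, div_eq_mul_inv]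
    exact ((hshift.sub continuousOn_const).aestronglyMeasurable measurableSet_Ici).mul
      measurable_inv.aestronglyMeasurable
  have hbound : ∀ᵐ z ∂μ.restrict (Ici 0), ‖slope f w (w + z)‖ ≤ max |m| |B| := by
    filter_upwards [ae_restrict_mem measurableSet_Ici] with z (hz : 0 ≤ z)
    rcases hz.eq_or_lt with rfl | hz
    · simp
    · obtain ⟨hm, hB⟩ := hslope (w + z) (lt_add_of_pos_right w hz)
      exact abs_le_max_abs_abs hm hB
  have hfactor : ∀ z, z * slope f w (w + z) = f (w + z) - f w := fun z => by
    simpa only [add_sub_cancel_left, smul_eq_mul, vsub_eq_sub] using sub_smul_slope f w (w + z)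
  simpa only [IntegrableOn, mul_assoc, hfactor] using hk.mul_bdd hmeas hbound

lemma integral_mul_self_mul_derivWithin_le_integral_mul_sub {A B : ℝ}
    (hk_nonneg : ∀ z, 0 ≤ z → 0 ≤ k z) (hk : IntegrableOn (fun z => k z * z) (Ici 0) μ)
    (hf : ConvexOn ℝ (Ici 0) f) (hfd : DifferentiableOn ℝ f (Ici 0))
    (hgrowth : ∀ x, 0 ≤ x → f x ≤ A + B * x) (hw : 0 ≤ w) :
    (∫ z in Ici 0, k z * z ∂μ) * derivWithin f (Ici 0) w ≤
      ∫ z in Ici 0, k z * (f (w + z) - f w) ∂μ := by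
  have htangent : ∀ y, w < y → derivWithin f (Ici 0) w ≤ slope f w y := fun y hy =>
    hf.derivWithin_le_slope hw (hw.trans hy.le) hy (hfd w hw)
  have hjump : IntegrableOn (fun z => k z * (f (w + z) - f w)) (Ici 0) μ :=
    integrableOn_mul_sub_of_slope_mem_Icc hk (hfd.continuousOn.mono (Ici_subset_Ici.2 hw))
      fun y hy => ⟨htangent y hy, slope_le_of_convexOn_Ici_of_le_add_mul hf hgrowth hw hy⟩
  rw [← integral_mul_const]
  refine setIntegral_mono_on (hk.mul_const _) hjump measurableSet_Ici fun z (hz : 0 ≤ z) => ?_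
  rw [mul_assoc]
  refine mul_le_mul_of_nonneg_left ?_ (hk_nonneg z hz)
  rcases hz.eq_or_lt with rfl | hz
  · simp
  · have hslope := htangent (w + z) (lt_add_of_pos_right w hz)
    rwa [slope_def_field, add_sub_cancel_left, le_div_iff₀' hz] at hslope

end Jump

/-- The first moment `∫₀^∞ k(z) z dz` of a jump kernel; for `k = 𝒦(t,·)` it is the rate at which
`𝕐` increases and `𝕏` decreases. -/
noncomputable def firstMoment (k : ℝ → ℝ) : ℝ :=
  ∫ z in Ici (0 : ℝ), k z * z

lemma firstMoment_nonneg {k : ℝ → ℝ} (hk : ∀ z, 0 ≤ z → 0 ≤ k z) : 0 ≤ firstMoment k :=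
  setIntegral_nonneg measurableSet_Ici fun z hz => mul_nonneg (hk z hz) hz

section SuperSol

variable {K : ℝ → ℝ → ℝ} {T₁ t : ℝ} {P : ℝ → ℝ}

lemma XX_nonneg (hK : ∀ s ∈ Icc t T₁, ∀ z, 0 ≤ z → 0 ≤ K s z) (ht : t ≤ T₁) : 0 ≤ XX K T₁ t :=
  intervalIntegral.integral_nonneg ht fun s hs => firstMoment_nonneg (hK s hs)

lemma hasDerivAt_XX (hKcont : ContinuousOn (fun s => firstMoment (K s)) (Icc 0 T₁))
    (ht : t ∈ Ioo 0 T₁) : HasDerivAt (XX K T₁) (-firstMoment (K t)) t :=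
  intervalIntegral.integral_hasDerivAt_left
    ((hKcont.mono (Icc_subset_Icc_left ht.1.le)).intervalIntegrable_of_Icc ht.2.le)
    ((hKcont.mono Ioo_subset_Icc_self).stronglyMeasurableAtFilter isOpen_Ioo t ht)
    (hKcont.continuousAt (Icc_mem_nhds ht.1 ht.2))

lemma hasDerivAt_YY (hKcont : ContinuousOn (fun s => firstMoment (K s)) (Icc 0 T₁))
    (ht : t ∈ Ioo 0 T₁) : HasDerivAt (YY K) (firstMoment (K t)) t :=
  intervalIntegral.integral_hasDerivAt_right
    ((hKcont.mono (Icc_subset_Icc_right ht.2.le)).intervalIntegrable_of_Icc ht.1.le)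
    ((hKcont.mono Ioo_subset_Icc_self).stronglyMeasurableAtFilter isOpen_Ioo t ht)
    (hKcont.continuousAt (Icc_mem_nhds ht.1 ht.2))

lemma hasDerivAt_superSol {x : ℝ} (hK : ∀ s ∈ Icc 0 T₁, ∀ z, 0 ≤ z → 0 ≤ K s z)
    (hKcont : ContinuousOn (fun s => firstMoment (K s)) (Icc 0 T₁))
    (hP : DifferentiableOn ℝ P (Ici 0)) (ht : t ∈ Ioo 0 T₁) (hx : 0 ≤ x) :
    HasDerivAt (fun s => superSol K T₁ P s x)
      (exp (YY K t) *
        (firstMoment (K t) * (P (XX K T₁ t + x) - derivWithin P (Ici 0) (XX K T₁ t + x)))) t := by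
  have hmem : ∀ s ∈ Ioo 0 T₁, XX K T₁ s + x ∈ Ici 0 := fun s hs =>
    add_nonneg (XX_nonneg (fun r hr => hK r ⟨hs.1.le.trans hr.1, hr.2⟩) hs.2.le) hx
  have hPX : HasDerivAt (fun s => P (XX K T₁ s + x))
      (derivWithin P (Ici 0) (XX K T₁ t + x) * -firstMoment (K t)) t :=
    (hP _ (hmem t ht)).hasDerivWithinAt.comp_hasDerivAt t ((hasDerivAt_XX hKcont ht).add_const x)
      (Filter.eventually_of_mem (Ioo_mem_nhds ht.1 ht.2) hmem)
  refine ((hasDerivAt_YY hKcont ht).exp.mul hPX).congr_deriv ?_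
  ring

lemma integral_mul_superSol_sub (k : ℝ → ℝ) (x : ℝ) :
    ∫ z in Ici (0 : ℝ), k z * (superSol K T₁ P t (x + z) - superSol K T₁ P t x) =
      exp (YY K t) *
        ∫ z in Ici (0 : ℝ), k z * (P (XX K T₁ t + x + z) - P (XX K T₁ t + x)) := by
  rw [← integral_const_mul]
  congr 1 with z
  simp only [superSol, ← add_assoc]
  ring

end SuperSol

theorem supersolution_lemma_general {T₁ A B : ℝ} {K : ℝ → ℝ → ℝ} {P : ℝ → ℝ}
    (hK : ∀ t ∈ Icc 0 T₁, ∀ z, 0 ≤ z → 0 ≤ K t z)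
    (hKint : ∀ t ∈ Icc 0 T₁, IntegrableOn (fun z => K t z * z) (Ici 0))
    (hKcont : ContinuousOn (fun t => firstMoment (K t)) (Icc 0 T₁))
    (hP : ∀ x, 0 ≤ x → 0 ≤ P x) (hPgrowth : ∀ x, 0 ≤ x → P x ≤ A + B * x)
    (hPd : DifferentiableOn ℝ P (Ici 0)) (hPconv : ConvexOn ℝ (Ici 0) P)
    {t : ℝ} (ht : t ∈ Ioo 0 T₁) {x : ℝ} (hx : 0 ≤ x) :
    0 ≤ deriv (fun s => superSol K T₁ P s x) t
        + ∫ z in Ici (0 : ℝ), K t z * (superSol K T₁ P t (x + z) - superSol K T₁ P t x) := by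
  have ht' : t ∈ Icc 0 T₁ := Ioo_subset_Icc_self ht
  have hw : 0 ≤ XX K T₁ t + x :=
    add_nonneg (XX_nonneg (fun s hs => hK s ⟨ht'.1.trans hs.1, hs.2⟩) ht'.2) hx
  have hjump : firstMoment (K t) * derivWithin P (Ici 0) (XX K T₁ t + x) ≤
      ∫ z in Ici (0 : ℝ), K t z * (P (XX K T₁ t + x + z) - P (XX K T₁ t + x)) :=
    integral_mul_self_mul_derivWithin_le_integral_mul_sub (hK t ht') (hKint t ht') hPconv hPd
      hPgrowth hw
  have hmain : 0 ≤ firstMoment (K t) * P (XX K T₁ t + x) :=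
    mul_nonneg (firstMoment_nonneg (hK t ht')) (hP _ hw)
  rw [(hasDerivAt_superSol hK hKcont hPd ht hx).deriv, integral_mul_superSol_sub, ← mul_add]
  refine mul_nonneg (exp_nonneg _) ?_
  linarith

/-- **Supersolution lemma** (Lemma 7.1): under the stated hypotheses on the kernel `𝒦`
and on the bounded `C¹` convex function `𝒫`, the function
`ψ(t,x) = e^{𝕐(t)} 𝒫(𝕏(t)+x)` is a supersolution of the transport-jump equation:
`∂_t ψ(t,x) + ∫₀^∞ 𝒦(t,z)(ψ(t,x+z) − ψ(t,x)) dz ≥ 0` for `t ∈ (0,T₁)` and `x ≥ 0`. -/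
theorem supersolution_lemma (T₁ : ℝ) (hT₁ : 0 < T₁) (K : ℝ → ℝ → ℝ)
    (hKmeas : Measurable (Function.uncurry K))
    (hKpos : ∀ t z : ℝ, 0 ≤ K t z)
    (hKint : ∀ t ∈ Set.Icc (0:ℝ) T₁,
      Integrable (fun z => K t z * (1 + z)) (volume.restrict (Set.Ici 0)))
    (hKcont : ContinuousOn (fun t => ∫ z in Set.Ici (0:ℝ), K t z * z) (Set.Icc 0 T₁))
    (P : ℝ → ℝ)
    (hPpos : ∀ x : ℝ, 0 ≤ x → 0 ≤ P x)
    (hPbdd : ∃ M : ℝ, ∀ x : ℝ, 0 ≤ x → P x ≤ M)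
    (hPC1 : ContDiff ℝ 1 P)
    (hPconv : ∀ z₁ : ℝ, 0 ≤ z₁ → ∀ z₂ : ℝ, 0 ≤ z₂ → deriv P z₁ ≤ deriv P (z₁ + z₂)) :
    ∀ t ∈ Set.Ioo (0:ℝ) T₁, ∀ x : ℝ, 0 ≤ x →
      0 ≤ deriv (fun s => superSol K T₁ P s x) t
          + ∫ z in Set.Ici (0:ℝ),
              K t z * (superSol K T₁ P t (x + z) - superSol K T₁ P t x) := by
  obtain ⟨M, hM⟩ := hPbdd
  have hP : Differentiable ℝ P := hPC1.differentiable one_ne_zero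
  exact fun t ht x hx => supersolution_lemma_general (A := M) (B := 0) (fun t _ z _ => hKpos t z)
    (fun t ht => integrableOn_mul_self_of_mul_one_add (hKint t ht)) hKcont hPpos
    (by simpa only [zero_mul, add_zero] using hM) hP.differentiableOn
    (convexOn_Ici_of_deriv_le_deriv_add hP hPconv) ht hx
end

section
/- Quadruple sine integral, balanced regime (used in the weak formulation of the 2↔2 operator, Lemma 3.2): For all real numbers a, b, c, d with 0 < a ≤ b ≤ c ≤ d and a + d ≤ b + c, the function s ↦ sin(a s) sin(b s) sin(c s) sin(d s)/s² is absolutely integrable on (0,∞) and ∫₀^∞ sin(a s) sin(b s) sin(c s) sin(d s)/s² ds = (π/4)·a, i.e., π/4 times the minimum of a, b, c, d. -/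
open Real MeasureTheory

/-!
Since `sin (ks) sin (ls) = (cos ((k-l)s) - cos ((k+l)s)) / 2`, the classical integral
`∫₀^∞ (1 - cos (ks)) / s² ds = π|k|/2` (write `1/s²` as `∫₀^∞ t exp (-st) dt` and swap) gives
`J(k, l) := ∫₀^∞ sin (ks) sin (ls) / s² ds = π (|k+l| - |k-l|) / 4`, which is `π k / 2` when
`|k| ≤ l` and, by symmetry, `π l / 2` when `|l| ≤ k`. Expanding the product of the first three
sines,
`∫₀^∞ sin (as) sin (bs) sin (cs) sin (ds) / s² ds`
`= (J(a+b-c, d) + J(a-b+c, d) + J(-a+b+c, d) - J(a+b+c, d)) / 4`.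
The ordering of `a, b, c, d` puts the first two terms in the case `|k| ≤ l` and the last one in
the case `|l| ≤ k`; the balance condition `d ≤ -a+b+c` puts the third one there too. The terms in
`d` cancel, leaving `π ((a+b-c) + (a-b+c)) / 8 = π a / 4`.
-/

section Laplace

variable {t : ℝ}

lemma integrableOn_exp_neg_mul_Ioi_zero (ht : 0 < t) :
    IntegrableOn (fun s : ℝ => exp (-(s * t))) (Set.Ioi 0) := by
  simpa [mul_comm] using integrableOn_exp_mul_Ioi (neg_lt_zero.2 ht) 0

lemma integral_exp_neg_mul_Ioi_zero (ht : 0 < t) :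
    ∫ s in Set.Ioi (0 : ℝ), exp (-(s * t)) = 1 / t := by
  simpa [mul_comm] using integral_exp_mul_Ioi (neg_lt_zero.2 ht) 0

lemma exp_neg_mul_mul_cos_eq_re (k s : ℝ) :
    exp (-(s * t)) * cos (k * s) = RCLike.re (Complex.exp ((-t + k * Complex.I) * s)) := by
  simp [Complex.exp_re, mul_comm]

lemma integrableOn_exp_neg_mul_mul_cos (ht : 0 < t) (k : ℝ) :
    IntegrableOn (fun s : ℝ => exp (-(s * t)) * cos (k * s)) (Set.Ioi 0) := by
  simp only [exp_neg_mul_mul_cos_eq_re]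
  exact (integrableOn_exp_mul_complex_Ioi (by simpa using ht) 0).re

lemma integral_exp_neg_mul_mul_cos (ht : 0 < t) (k : ℝ) :
    ∫ s in Set.Ioi (0 : ℝ), exp (-(s * t)) * cos (k * s) = t / (t ^ 2 + k ^ 2) := by
  have hre : (-t + k * Complex.I : ℂ).re < 0 := by simpa using ht
  simp only [exp_neg_mul_mul_cos_eq_re]
  rw [integral_re (integrableOn_exp_mul_complex_Ioi hre 0), integral_exp_mul_complex_Ioi hre]
  simp [Complex.div_re, Complex.normSq_apply, sq]

lemma integrableOn_one_sub_cos_mul_exp_neg_mul (ht : 0 < t) (k : ℝ) :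
    IntegrableOn (fun s : ℝ => (1 - cos (k * s)) * (t * exp (-(s * t)))) (Set.Ioi 0) :=
  (((integrableOn_exp_neg_mul_Ioi_zero ht).sub
    (integrableOn_exp_neg_mul_mul_cos ht k)).const_mul t).congr
      (.of_forall fun s => by simp only [Pi.sub_apply]; ring)

lemma integral_one_sub_cos_mul_exp_neg_mul_left (ht : 0 < t) (k : ℝ) :
    ∫ s in Set.Ioi (0 : ℝ), (1 - cos (k * s)) * (t * exp (-(s * t))) =
      k ^ 2 / (t ^ 2 + k ^ 2) := by
  calc ∫ s in Set.Ioi (0 : ℝ), (1 - cos (k * s)) * (t * exp (-(s * t)))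
      = ∫ s in Set.Ioi (0 : ℝ), t * (exp (-(s * t)) - exp (-(s * t)) * cos (k * s)) := by
        congr with s
        ring
    _ = t * (1 / t - t / (t ^ 2 + k ^ 2)) := by
        rw [integral_const_mul, integral_sub (integrableOn_exp_neg_mul_Ioi_zero ht)
          (integrableOn_exp_neg_mul_mul_cos ht k), integral_exp_neg_mul_Ioi_zero ht,
          integral_exp_neg_mul_mul_cos ht k]
    _ = k ^ 2 / (t ^ 2 + k ^ 2) := by
        field_simp
        ring

lemma integral_mul_exp_neg_mul_Ioi {s : ℝ} (hs : 0 < s) :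
    ∫ t in Set.Ioi (0 : ℝ), t * exp (-(s * t)) = 1 / s ^ 2 := by
  have h := integral_rpow_mul_exp_neg_mul_Ioi two_pos hs
  simpa only [show (2 : ℝ) - 1 = 1 by norm_num, rpow_one, rpow_two, Gamma_two, mul_one, one_div,
    inv_pow] using h

lemma integral_one_sub_cos_mul_exp_neg_mul_right {s : ℝ} (hs : 0 < s) (k : ℝ) :
    ∫ t in Set.Ioi (0 : ℝ), (1 - cos (k * s)) * (t * exp (-(s * t))) =
      (1 - cos (k * s)) / s ^ 2 := by
  rw [integral_const_mul, integral_mul_exp_neg_mul_Ioi hs, mul_one_div]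

end Laplace

section CauchyDensity

lemma sq_div_sq_add_sq_eq {k : ℝ} (hk : k ≠ 0) (t : ℝ) :
    k ^ 2 / (t ^ 2 + k ^ 2) = (1 + (|k|⁻¹ * t) ^ 2)⁻¹ := by
  rw [mul_pow, inv_pow, sq_abs]
  field_simp
  ring

lemma integrable_sq_div_sq_add_sq (k : ℝ) :
    Integrable fun t : ℝ => k ^ 2 / (t ^ 2 + k ^ 2) := by
  rcases eq_or_ne k 0 with rfl | hk
  · simp
  · simp only [sq_div_sq_add_sq_eq hk]
    exact integrable_inv_one_add_sq.comp_mul_left' (inv_ne_zero (abs_ne_zero.2 hk))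

lemma integral_Ioi_sq_div_sq_add_sq (k : ℝ) :
    ∫ t in Set.Ioi (0 : ℝ), k ^ 2 / (t ^ 2 + k ^ 2) = π / 2 * |k| := by
  rcases eq_or_ne k 0 with rfl | hk
  · simp
  · simp only [sq_div_sq_add_sq_eq hk]
    rw [integral_comp_mul_left_Ioi (fun t : ℝ => (1 + t ^ 2)⁻¹) 0 (by positivity)]
    simp [mul_comm]

end CauchyDensity

section OneSubCos

variable (k : ℝ)

lemma integrable_prod_one_sub_cos_mul_exp_neg_mul :
    Integrable (fun p : ℝ × ℝ => (1 - cos (k * p.1)) * (p.2 * exp (-(p.1 * p.2))))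
      ((volume.restrict (Set.Ioi 0)).prod (volume.restrict (Set.Ioi 0))) := by
  have hcont : Continuous fun p : ℝ × ℝ => (1 - cos (k * p.1)) * (p.2 * exp (-(p.1 * p.2))) := by
    fun_prop
  have hnonneg {t : ℝ} (ht : 0 < t) (s : ℝ) : 0 ≤ (1 - cos (k * s)) * (t * exp (-(s * t))) :=
    mul_nonneg (sub_nonneg.2 (cos_le_one _)) (by positivity)
  refine (integrable_prod_iff' hcont.aestronglyMeasurable).2 ⟨?_, ?_⟩
  · filter_upwards [ae_restrict_mem measurableSet_Ioi] with t ht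
    exact integrableOn_one_sub_cos_mul_exp_neg_mul ht k
  · refine (integrable_sq_div_sq_add_sq k).integrableOn.congr_fun (fun t ht => ?_)
      measurableSet_Ioi
    simp only [norm_of_nonneg (hnonneg ht _), integral_one_sub_cos_mul_exp_neg_mul_left ht]

lemma integrableOn_one_sub_cos_div_sq :
    IntegrableOn (fun s : ℝ => (1 - cos (k * s)) / s ^ 2) (Set.Ioi 0) :=
  IntegrableOn.congr_fun (integrable_prod_one_sub_cos_mul_exp_neg_mul k).integral_prod_left
    (fun _ hs => integral_one_sub_cos_mul_exp_neg_mul_right hs k) measurableSet_Ioi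

lemma integral_one_sub_cos_div_sq :
    ∫ s in Set.Ioi (0 : ℝ), (1 - cos (k * s)) / s ^ 2 = π / 2 * |k| := by
  calc ∫ s in Set.Ioi (0 : ℝ), (1 - cos (k * s)) / s ^ 2
      = ∫ s in Set.Ioi (0 : ℝ), ∫ t in Set.Ioi (0 : ℝ),
          (1 - cos (k * s)) * (t * exp (-(s * t))) :=
        setIntegral_congr_fun measurableSet_Ioi fun s hs =>
          (integral_one_sub_cos_mul_exp_neg_mul_right hs k).symm
    _ = ∫ t in Set.Ioi (0 : ℝ), ∫ s in Set.Ioi (0 : ℝ),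
          (1 - cos (k * s)) * (t * exp (-(s * t))) :=
        integral_integral_swap (integrable_prod_one_sub_cos_mul_exp_neg_mul k)
    _ = ∫ t in Set.Ioi (0 : ℝ), k ^ 2 / (t ^ 2 + k ^ 2) :=
        setIntegral_congr_fun measurableSet_Ioi fun t ht =>
          integral_one_sub_cos_mul_exp_neg_mul_left ht k
    _ = π / 2 * |k| := integral_Ioi_sq_div_sq_add_sq k

end OneSubCos

section SinMulSin

variable (k l : ℝ)

lemma sin_mul_sin_div_sq_eq (s : ℝ) :
    sin (k * s) * sin (l * s) / s ^ 2 =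
      1 / 2 * ((1 - cos ((k + l) * s)) / s ^ 2 - (1 - cos ((k - l) * s)) / s ^ 2) := by
  rw [add_mul, sub_mul]
  linear_combination (1 / (2 * s ^ 2)) * two_mul_sin_mul_sin (k * s) (l * s)

lemma integrableOn_sin_mul_sin_div_sq :
    IntegrableOn (fun s : ℝ => sin (k * s) * sin (l * s) / s ^ 2) (Set.Ioi 0) := by
  simp only [sin_mul_sin_div_sq_eq]
  exact ((integrableOn_one_sub_cos_div_sq _).sub (integrableOn_one_sub_cos_div_sq _)).const_mul _

lemma integral_sin_mul_sin_div_sq :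
    ∫ s in Set.Ioi (0 : ℝ), sin (k * s) * sin (l * s) / s ^ 2 = π / 4 * (|k + l| - |k - l|) := by
  simp only [sin_mul_sin_div_sq_eq]
  rw [integral_const_mul, integral_sub (integrableOn_one_sub_cos_div_sq _)
    (integrableOn_one_sub_cos_div_sq _), integral_one_sub_cos_div_sq, integral_one_sub_cos_div_sq]
  ring

variable {k l}

lemma integral_sin_mul_sin_div_sq_of_abs_le_right (h : |k| ≤ l) :
    ∫ s in Set.Ioi (0 : ℝ), sin (k * s) * sin (l * s) / s ^ 2 = π / 2 * k := by
  obtain ⟨hneg, hpos⟩ := abs_le.1 h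
  rw [integral_sin_mul_sin_div_sq, abs_of_nonneg (by linarith), abs_of_nonpos (by linarith)]
  ring

lemma integral_sin_mul_sin_div_sq_of_abs_le_left (h : |l| ≤ k) :
    ∫ s in Set.Ioi (0 : ℝ), sin (k * s) * sin (l * s) / s ^ 2 = π / 2 * l := by
  simpa only [mul_comm (sin (l * _))] using integral_sin_mul_sin_div_sq_of_abs_le_right h

end SinMulSin

section QuadrupleSine

lemma four_mul_sin_mul_sin_mul_sin (x y z : ℝ) :
    4 * (sin x * sin y * sin z) =
      sin (x + y - z) + sin (x - y + z) + sin (-x + y + z) - sin (x + y + z) := by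
  simp only [sin_add, sin_sub, cos_add, cos_sub, sin_neg, cos_neg]
  ring

variable (a b c d : ℝ)

lemma sin_mul_sin_mul_sin_mul_sin_div_sq_eq (s : ℝ) :
    sin (a * s) * sin (b * s) * sin (c * s) * sin (d * s) / s ^ 2 =
      1 / 4 * (sin ((a + b - c) * s) * sin (d * s) / s ^ 2 +
        sin ((a - b + c) * s) * sin (d * s) / s ^ 2 +
        sin ((-a + b + c) * s) * sin (d * s) / s ^ 2 -
        sin ((a + b + c) * s) * sin (d * s) / s ^ 2) := by
  simp only [add_mul, sub_mul, neg_mul]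
  linear_combination
    sin (d * s) / (4 * s ^ 2) * four_mul_sin_mul_sin_mul_sin (a * s) (b * s) (c * s)

lemma integrableOn_sin_mul_sin_mul_sin_mul_sin_div_sq :
    IntegrableOn (fun s : ℝ => sin (a * s) * sin (b * s) * sin (c * s) * sin (d * s) / s ^ 2)
      (Set.Ioi 0) := by
  simp only [sin_mul_sin_mul_sin_mul_sin_div_sq_eq]
  have hJ (k : ℝ) := integrableOn_sin_mul_sin_div_sq k d
  exact ((((hJ _).add (hJ _)).add (hJ _)).sub (hJ _)).const_mul _

lemma integral_sin_mul_sin_mul_sin_mul_sin_div_sq :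
    ∫ s in Set.Ioi (0 : ℝ), sin (a * s) * sin (b * s) * sin (c * s) * sin (d * s) / s ^ 2 =
      1 / 4 * ((∫ s in Set.Ioi (0 : ℝ), sin ((a + b - c) * s) * sin (d * s) / s ^ 2) +
        (∫ s in Set.Ioi (0 : ℝ), sin ((a - b + c) * s) * sin (d * s) / s ^ 2) +
        (∫ s in Set.Ioi (0 : ℝ), sin ((-a + b + c) * s) * sin (d * s) / s ^ 2) -
        ∫ s in Set.Ioi (0 : ℝ), sin ((a + b + c) * s) * sin (d * s) / s ^ 2) := by
  simp only [sin_mul_sin_mul_sin_mul_sin_div_sq_eq]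
  have hJ (k : ℝ) := integrableOn_sin_mul_sin_div_sq k d
  rw [integral_const_mul, integral_sub (((hJ _).fun_add (hJ _)).fun_add (hJ _)) (hJ _),
    integral_add ((hJ _).fun_add (hJ _)) (hJ _), integral_add (hJ _) (hJ _)]

end QuadrupleSine

/-- **Quadruple sine integral, balanced regime** (Lemma 3.2): for `0 < a ≤ b ≤ c ≤ d` with
`a + d ≤ b + c`, the function `s ↦ sin(as) sin(bs) sin(cs) sin(ds)/s²` is absolutely
integrable on `(0,∞)` and its integral equals `(π/4)·a`, i.e. `π/4` times
`min{a,b,c,d}`. -/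
theorem quadruple_sine_integral_balanced (a b c d : ℝ) (ha : 0 < a)
    (hab : a ≤ b) (hbc : b ≤ c) (hcd : c ≤ d) (hbal : a + d ≤ b + c) :
    IntegrableOn
      (fun s : ℝ => Real.sin (a*s) * Real.sin (b*s) * Real.sin (c*s) * Real.sin (d*s) / s^2)
      (Set.Ioi 0) ∧
    ∫ s in Set.Ioi (0:ℝ),
        Real.sin (a*s) * Real.sin (b*s) * Real.sin (c*s) * Real.sin (d*s) / s^2
      = Real.pi / 4 * a := by
  refine ⟨integrableOn_sin_mul_sin_mul_sin_mul_sin_div_sq a b c d, ?_⟩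
  have hk₁ : |a + b - c| ≤ d := abs_le.2 ⟨by linarith, by linarith⟩
  have hk₂ : |a - b + c| ≤ d := abs_le.2 ⟨by linarith, by linarith⟩
  have hk₃ : |d| ≤ -a + b + c := abs_le.2 ⟨by linarith, by linarith⟩
  have hk₄ : |d| ≤ a + b + c := abs_le.2 ⟨by linarith, by linarith⟩
  rw [integral_sin_mul_sin_mul_sin_mul_sin_div_sq,
    integral_sin_mul_sin_div_sq_of_abs_le_right hk₁,
    integral_sin_mul_sin_div_sq_of_abs_le_right hk₂,
    integral_sin_mul_sin_div_sq_of_abs_le_left hk₃,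
    integral_sin_mul_sin_div_sq_of_abs_le_left hk₄]
  ring
end

section
/- Weighted concavity inequality (core of the C₂₂ estimate in the proof of Lemma 4.1): Let φ : [0,∞) → ℝ be concave, let Θ : [0,∞) → [0,∞) be nondecreasing, and let 0 ≤ a ≤ b ≤ c. Then Θ(c+a−b)·(φ(b) + φ(c+a−b) − φ(c) − φ(a)) + Θ(c+b−a)·(φ(a) + φ(c+b−a) − φ(c) − φ(b)) ≤ Θ(c+b−a)·(φ(c+a−b) + φ(c+b−a) − 2φ(c)). -/
/-!
Concavity makes `D = φ b + φ (c + a - b) - φ c - φ a` nonnegative, because `b` and `c + a - b` are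
the convex combinations of `a` and `c` with swapped weights. The terms `φ (c + b - a)` cancel from
the inequality, and what remains is `Θ (c + a - b) * D ≤ Θ (c + b - a) * D`.
-/

theorem smul_add_smul_add_swap {R M : Type*} [Semiring R] [AddCommMonoid M] [Module R M]
    {u v : R} (huv : u + v = 1) (x y : M) :
    (u • x + v • y) + (v • x + u • y) = x + y := by
  rw [add_add_add_comm, ← add_smul, ← add_smul, add_comm v, huv, one_smul, one_smul]

theorem concaveOn_add_le_add_of_mem_segment {𝕜 E β : Type*} [Semiring 𝕜] [PartialOrder 𝕜]
    [AddCommGroup E] [Module 𝕜 E] [AddCommMonoid β] [PartialOrder β] [IsOrderedAddMonoid β]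
    [Module 𝕜 β] {s : Set E} {f : E → β} (hf : ConcaveOn 𝕜 s f) {x y z : E}
    (hx : x ∈ s) (hz : z ∈ s) (hy : y ∈ segment 𝕜 x z) :
    f x + f z ≤ f y + f (z + x - y) := by
  obtain ⟨u, v, hu, hv, huv, rfl⟩ := hy
  have hvu : v + u = 1 := by rwa [add_comm]
  have reflection_eq : z + x - (u • x + v • z) = v • x + u • z := by
    rw [sub_eq_iff_eq_add', smul_add_smul_add_swap huv, add_comm]
  calc
    f x + f z = (u • f x + v • f z) + (v • f x + u • f z) := (smul_add_smul_add_swap huv _ _).symm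
    _ ≤ f (u • x + v • z) + f (v • x + u • z) :=
      add_le_add (hf.2 hx hz hu hv huv) (hf.2 hx hz hv hu hvu)
    _ = f (u • x + v • z) + f (z + x - (u • x + v • z)) := by rw [reflection_eq]

theorem weighted_concavity_general {𝕜 β : Type*} [Field 𝕜] [LinearOrder 𝕜]
    [IsStrictOrderedRing 𝕜] [AddCommGroup β] [PartialOrder β] [IsOrderedAddMonoid β]
    [Module 𝕜 β] [SMulPosMono 𝕜 β] {s : Set 𝕜} {φ : 𝕜 → β} (hφ : ConcaveOn 𝕜 s φ)
    {Θ : 𝕜 → 𝕜} (hΘ : MonotoneOn Θ s) {a b c : 𝕜} (ha : a ∈ s) (hcba : c + b - a ∈ s)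
    (hab : a ≤ b) (hbc : b ≤ c) :
    Θ (c + a - b) • (φ b + φ (c + a - b) - φ c - φ a)
      + Θ (c + b - a) • (φ a + φ (c + b - a) - φ c - φ b)
    ≤ Θ (c + b - a) • (φ (c + a - b) + φ (c + b - a) - (2 : 𝕜) • φ c) := by
  have hs : s.OrdConnected := hφ.1.ordConnected
  have hc : c ∈ s := hs.out ha hcba ⟨hab.trans hbc, by linarith⟩
  have hcab : c + a - b ∈ s := hs.out ha hc ⟨by linarith, by linarith⟩
  have hΘ_le : Θ (c + a - b) ≤ Θ (c + b - a) := hΘ hcab hcba (by linarith)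
  have hφ_nonneg : 0 ≤ φ b + φ (c + a - b) - φ c - φ a := by
    rw [sub_sub, sub_nonneg, add_comm (φ c)]
    exact concaveOn_add_le_add_of_mem_segment hφ ha hc (Icc_subset_segment ⟨hab, hbc⟩)
  calc
    _ ≤ Θ (c + b - a) • (φ b + φ (c + a - b) - φ c - φ a)
        + Θ (c + b - a) • (φ a + φ (c + b - a) - φ c - φ b) := by gcongr
    _ = Θ (c + b - a) • (φ (c + a - b) + φ (c + b - a) - (2 : 𝕜) • φ c) := by module

/-- **Weighted concavity inequality** (core of the `C₂₂` estimate in the proof of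
Lemma 4.1): for a concave `φ : [0,∞) → ℝ`, a nondecreasing `Θ : [0,∞) → [0,∞)` and
`0 ≤ a ≤ b ≤ c`,
`Θ(c+a−b)(φ(b) + φ(c+a−b) − φ(c) − φ(a)) + Θ(c+b−a)(φ(a) + φ(c+b−a) − φ(c) − φ(b))`
`≤ Θ(c+b−a)(φ(c+a−b) + φ(c+b−a) − 2φ(c))`. -/
theorem weighted_concavity (φ : ℝ → ℝ) (hφ : ConcaveOn ℝ (Set.Ici 0) φ)
    (Θ : ℝ → ℝ) (hΘmono : MonotoneOn Θ (Set.Ici 0))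
    (hΘpos : ∀ x : ℝ, 0 ≤ x → 0 ≤ Θ x)
    (a b c : ℝ) (ha : 0 ≤ a) (hab : a ≤ b) (hbc : b ≤ c) :
    Θ (c + a - b) * (φ b + φ (c + a - b) - φ c - φ a)
      + Θ (c + b - a) * (φ a + φ (c + b - a) - φ c - φ b)
    ≤ Θ (c + b - a) * (φ (c + a - b) + φ (c + b - a) - 2 * φ c) :=
  weighted_concavity_general hφ hΘmono ha (Set.mem_Ici.2 (by linarith)) hab hbc
end
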